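/- Derivative bound for low-frequency projections (Lemma 2.2, estimate (2.6)). Let α ∈ [0,1), D ≥ 1, R ≥ 10, and let N ≥ 1 be dyadic. There exists a constant C = C(α,D) such that for every measurable φ : ℝ → ℂ with ‖⟨x⟩^{-D} φ‖_{L¹(ℝ)} < ∞, one has N^{α-1} ‖∂ₓ P_{≤N} φ‖_{C⁰([-R,R])} ≤ C ( ‖φ‖_{C^α([-2R,2R])} + (RN)^{-D} ‖⟨x⟩^{-D} φ‖_{L¹(ℝ)} ). -/

import Mathlib

open MeasureTheory Real Set ENNReal

noncomputable section

/-- The Japanese bracket `⟨x⟩ = √(1 + x²)`. -/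
def jap (x : ℝ) : ℝ := Real.sqrt (1 + x ^ 2)

/-- The inverse Fourier transform `ǧ(x) = (2π)^{-1/2} ∫ g(ξ) e^{i x ξ} dξ`. -/
def invFourier (g : ℝ → ℝ) (x : ℝ) : ℂ :=
  (Real.sqrt (2 * Real.pi) : ℂ)⁻¹ * ∫ ξ : ℝ, (g ξ : ℂ) * Complex.exp (Complex.I * ((x * ξ : ℝ) : ℂ))

/-- `ρ` is an admissible Littlewood–Paley bump function: smooth, `[0,1]`-valued, equal to `1`
on `[-1,1]` and vanishing outside of `[-9/8, 9/8]`. -/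
def IsLPBump (ρ : ℝ → ℝ) : Prop :=
  ContDiff ℝ (⊤ : ℕ∞) ρ ∧ (∀ ξ, ρ ξ ∈ Set.Icc (0 : ℝ) 1) ∧
    (∀ ξ ∈ Set.Icc (-1 : ℝ) 1, ρ ξ = 1) ∧
    ∀ ξ, ξ ∉ Set.Icc (-(9/8) : ℝ) (9/8) → ρ ξ = 0

/-- The symbol `ρ_{≤N}(ξ) = ρ(ξ/N)`. -/
def rhoLE (ρ : ℝ → ℝ) (N : ℝ) (ξ : ℝ) : ℝ := ρ (ξ / N)

open scoped Classical in
/-- The symbol `ρ_N`: `ρ_1 = ρ_{≤1}` and `ρ_N = ρ_{≤N} - ρ_{≤N/2}` for dyadic `N ≥ 2`. -/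
def rhoD (ρ : ℝ → ℝ) (N : ℝ) (ξ : ℝ) : ℝ :=
  if N = 1 then ρ ξ else ρ (ξ / N) - ρ (2 * ξ / N)

/-- The Littlewood–Paley projection `P_{≤N} φ = ρ̌_{≤N} ∗ φ`. -/
def PLE (ρ : ℝ → ℝ) (N : ℝ) (φ : ℝ → ℂ) (x : ℝ) : ℂ :=
  ∫ y : ℝ, invFourier (rhoLE ρ N) y * φ (x - y)

/-- The Littlewood–Paley projection `P_N φ = ρ̌_N ∗ φ`. -/
def PD (ρ : ℝ → ℝ) (N : ℝ) (φ : ℝ → ℂ) (x : ℝ) : ℂ :=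
  ∫ y : ℝ, invFourier (rhoD ρ N) y * φ (x - y)

/-- The weighted norm `‖⟨x⟩^{-D} φ‖_{L¹(ℝ)}`. -/
def wL1 (D : ℝ) (φ : ℝ → ℂ) : ℝ := ∫ x : ℝ, jap x ^ (-D) * ‖φ x‖

/-- The `ℝ≥0∞`-valued sup-norm `‖φ‖_{C⁰(I)}`. -/
def supNormE (I : Set ℝ) (φ : ℝ → ℂ) : ℝ≥0∞ := ⨆ x ∈ I, (‖φ x‖₊ : ℝ≥0∞)

/-- The `ℝ≥0∞`-valued Hölder seminorm on `I`. -/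
def holderSemiE (α : ℝ) (I : Set ℝ) (φ : ℝ → ℂ) : ℝ≥0∞ :=
  ⨆ x ∈ I, ⨆ y ∈ I, ⨆ _ : x ≠ y, ⨆ _ : |x - y| ≤ 1,
    ENNReal.ofReal (‖φ x - φ y‖ / |x - y| ^ α)

open scoped Classical in
/-- The `ℝ≥0∞`-valued Hölder norm `‖φ‖_{C^α(I)}`; for `α = 0` it is the sup-norm. -/
def holderNormE (α : ℝ) (I : Set ℝ) (φ : ℝ → ℂ) : ℝ≥0∞ :=
  if α = 0 then supNormE I φ else supNormE I φ + holderSemiE α I φ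

open scoped SchwartzMap FourierTransform ContDiff

lemma one_le_jap (x : ℝ) : 1 ≤ jap x :=
  Real.one_le_sqrt.2 (by nlinarith [sq_nonneg x])

lemma jap_le_one_add_abs (x : ℝ) : jap x ≤ 1 + |x| :=
  Real.sqrt_le_iff.2 ⟨by positivity, by nlinarith [sq_abs x, abs_nonneg x]⟩

/-- A Schwartz function decays faster than any real power of `1 + |x|`. -/
lemma SchwartzMap.exists_one_add_abs_rpow_mul_norm_le (G : 𝓢(ℝ, ℂ)) (s : ℝ) :
    ∃ C : ℝ, 0 < C ∧ ∀ x, (1 + |x|) ^ s * ‖G x‖ ≤ C := by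
  obtain ⟨k, hk⟩ := exists_nat_ge s
  set B := 2 ^ k * (Finset.Iic (k, 0)).sup (fun m => SchwartzMap.seminorm ℝ m.1 m.2) G
  have hB (x : ℝ) : (1 + |x|) ^ k * ‖G x‖ ≤ B := by
    simpa using SchwartzMap.one_add_le_sup_seminorm_apply (𝕜 := ℝ) (m := (k, 0)) le_rfl le_rfl G x
  have hB0 : 0 ≤ B := le_trans (by positivity) (hB 0)
  refine ⟨B + 1, by positivity, fun x => ?_⟩
  have h : (1 + |x|) ^ s ≤ (1 + |x|) ^ k := by
    rw [← Real.rpow_natCast]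
    exact Real.rpow_le_rpow_of_exponent_le (by linarith [abs_nonneg x]) hk
  calc (1 + |x|) ^ s * ‖G x‖ ≤ (1 + |x|) ^ k * ‖G x‖ := by gcongr
    _ ≤ B + 1 := by linarith [hB x]

/-- The inverse Fourier transform of the rescaled bump is a rescaled Schwartz function. -/
lemma exists_schwartz_invFourier_rhoLE {ρ : ℝ → ℝ} (hρ : IsLPBump ρ) :
    ∃ G : 𝓢(ℝ, ℂ), ∀ N : ℝ, 0 < N → ∀ y, invFourier (rhoLE ρ N) y = N * G (N * y) := by
  obtain ⟨hsm, -, -, hsupp⟩ := hρ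
  have hpi : (0 : ℝ) < 2 * π := by positivity
  set f : ℝ → ℂ := fun ξ => ((√(2 * π) : ℂ)⁻¹ * (2 * π)) * (ρ (2 * π * ξ) : ℂ) with hf
  have hf_smooth : ContDiff ℝ ∞ f := by
    refine contDiff_const.mul (Complex.ofRealCLM.contDiff.comp ?_)
    exact hsm.comp (contDiff_const.mul contDiff_id)
  have hf_supp : HasCompactSupport f := by
    refine HasCompactSupport.intro (isCompact_Icc (a := -(9/8) / (2 * π)) (b := (9/8) / (2 * π)))
      fun ξ hξ => ?_
    have : ρ (2 * π * ξ) = 0 := by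
      refine hsupp _ fun h => hξ ⟨?_, ?_⟩
      · rw [div_le_iff₀ hpi]; linarith [h.1]
      · rw [le_div_iff₀ hpi]; linarith [h.2]
    simp [hf, this]
  refine ⟨𝓕⁻ (hf_supp.toSchwartzMap hf_smooth), fun N hN y => ?_⟩
  rw [SchwartzMap.fourierInv_coe, Real.fourierInv_eq']
  have hscale := Measure.integral_comp_mul_left
    (fun ξ : ℝ => (rhoLE ρ N ξ : ℂ) * Complex.exp (Complex.I * ((y * ξ : ℝ) : ℂ))) (2 * π * N)
  rw [abs_of_pos (by positivity)] at hscale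
  have hint : ∫ ξ : ℝ, (rhoLE ρ N ξ : ℂ) * Complex.exp (Complex.I * ((y * ξ : ℝ) : ℂ)) =
      (2 * π * N) * ∫ ξ : ℝ, (rhoLE ρ N (2 * π * N * ξ) : ℂ) *
        Complex.exp (Complex.I * ((y * (2 * π * N * ξ) : ℝ) : ℂ)) := by
    rw [hscale, Complex.real_smul, ← mul_assoc]
    have : (2 * π * N : ℂ) ≠ 0 := by
      exact_mod_cast (by positivity : (2 * π * N : ℝ) ≠ 0)
    push_cast
    rw [mul_inv_cancel₀ this, one_mul]
  rw [invFourier, hint, ← mul_assoc, ← integral_const_mul, ← integral_const_mul]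
  congr 1
  ext ξ
  have h1 : rhoLE ρ N (2 * π * N * ξ) = ρ (2 * π * ξ) := by
    rw [rhoLE]; congr 1; field_simp
  rw [h1]
  simp only [HasCompactSupport.toSchwartzMap_toFun, hf, smul_eq_mul, RCLike.inner_apply,
    conj_trivial]
  have h2 : Complex.I * ((y * (2 * π * N * ξ) : ℝ) : ℂ)
      = ((2 * π * (N * y * ξ) : ℝ) : ℂ) * Complex.I := by push_cast; ring
  rw [h2]
  ring

/-- A rescaled translate of a Schwartz function is dominated by any weight `⟨y⟩^{-D}`, locally
uniformly in the translation. -/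
lemma SchwartzMap.exists_norm_comp_le_jap (G : 𝓢(ℝ, ℂ)) {D N A : ℝ} (hD : 0 ≤ D) (hN : 1 ≤ N)
    (hA : 0 ≤ A) :
    ∃ C : ℝ, ∀ x, |x| ≤ A → ∀ y, ‖G (N * (x - y))‖ ≤ C * jap y ^ (-D) := by
  obtain ⟨C, hC, hG⟩ := G.exists_one_add_abs_rpow_mul_norm_le D
  refine ⟨(1 + A) ^ D * C, fun x hx y => ?_⟩
  have hj : 0 < jap y := one_pos.trans_le (one_le_jap y)
  rw [Real.rpow_neg hj.le, ← div_eq_mul_inv, le_div_iff₀ (by positivity)]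
  have hjap : jap y ≤ (1 + A) * (1 + |N * (x - y)|) := by
    have h1 : |y| ≤ |x| + |x - y| := by
      have := abs_sub x (x - y)
      simpa using this
    have h2 : |x - y| ≤ |N * (x - y)| := by
      rw [abs_mul, abs_of_pos (by linarith : (0 : ℝ) < N)]
      nlinarith [abs_nonneg (x - y)]
    nlinarith [jap_le_one_add_abs y, abs_nonneg (N * (x - y))]
  calc ‖G (N * (x - y))‖ * jap y ^ D
      ≤ ‖G (N * (x - y))‖ * ((1 + A) * (1 + |N * (x - y)|)) ^ D := by gcongr
    _ = (1 + A) ^ D * ((1 + |N * (x - y)|) ^ D * ‖G (N * (x - y))‖) := by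
      rw [Real.mul_rpow (by positivity) (by positivity)]; ring
    _ ≤ (1 + A) ^ D * C := by gcongr; exact hG _

lemma SchwartzMap.integrable_comp_mul {G : 𝓢(ℝ, ℂ)} {D N : ℝ} (hD : 0 ≤ D) (hN : 1 ≤ N)
    {φ : ℝ → ℂ} (hφ : Measurable φ) (hint : Integrable fun x => jap x ^ (-D) * ‖φ x‖) (x : ℝ) :
    Integrable fun y => G (N * (x - y)) * φ y := by
  obtain ⟨C, hC⟩ := G.exists_norm_comp_le_jap hD hN (abs_nonneg x)
  refine (hint.const_mul C).mono' ?_ (ae_of_all _ fun y => ?_)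
  · exact ((G.continuous.comp (by fun_prop)).measurable.mul hφ).aestronglyMeasurable
  · rw [norm_mul, ← mul_assoc]
    gcongr
    exact hC x le_rfl y

/-- Differentiation under the integral sign for convolution with a rescaled Schwartz function. -/
lemma SchwartzMap.hasDerivAt_integral_comp_mul (G : 𝓢(ℝ, ℂ)) {D N : ℝ} (hD : 0 ≤ D)
    (hN : 1 ≤ N) {φ : ℝ → ℂ} (hφ : Measurable φ)
    (hint : Integrable fun x => jap x ^ (-D) * ‖φ x‖) (x : ℝ) :
    HasDerivAt (fun x => ∫ y, G (N * (x - y)) * φ y)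
      (∫ y, N * SchwartzMap.derivCLM ℝ ℂ G (N * (x - y)) * φ y) x := by
  set G' := SchwartzMap.derivCLM ℝ ℂ G
  obtain ⟨C, hC⟩ := G'.exists_norm_comp_le_jap hD hN (by positivity : 0 ≤ |x| + 1)
  refine (hasDerivAt_integral_of_dominated_loc_of_deriv_le (s := Metric.ball x 1)
    (F' := fun x y => N * G' (N * (x - y)) * φ y)
    (bound := fun y => N * (C * (jap y ^ (-D) * ‖φ y‖)))
    (Metric.ball_mem_nhds x one_pos) ?_ ?_ ?_ ?_ ?_ ?_).2
  · exact Filter.Eventually.of_forall fun x =>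
      (SchwartzMap.integrable_comp_mul hD hN hφ hint x).aestronglyMeasurable
  · exact SchwartzMap.integrable_comp_mul hD hN hφ hint x
  · simp only [mul_assoc]
    exact ((SchwartzMap.integrable_comp_mul hD hN hφ hint x).const_mul _).aestronglyMeasurable
  · refine ae_of_all _ fun y x' hx' => ?_
    have hx'A : |x'| ≤ |x| + 1 := by
      have h1 : |x' - x| < 1 := by simpa [Real.dist_eq] using hx'
      have h2 := abs_sub_abs_le_abs_sub x' x
      linarith
    rw [norm_mul, norm_mul, Complex.norm_real, Real.norm_of_nonneg (by linarith), mul_assoc,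
      ← mul_assoc C]
    gcongr
    exact hC x' hx'A y
  · exact (hint.const_mul C).const_mul N
  · refine ae_of_all _ fun y x' _ => ?_
    have h1 : HasDerivAt (fun x : ℝ => N * (x - y)) N x' := by
      simpa using ((hasDerivAt_id x').sub_const y).const_mul N
    have h2 := ((G.hasDerivAt (N * (x' - y))).scomp x' h1).mul_const (φ y)
    rw [Complex.real_smul] at h2
    exact h2

lemma SchwartzMap.integral_derivCLM (G : 𝓢(ℝ, ℂ)) : ∫ x, SchwartzMap.derivCLM ℝ ℂ G x = 0 :=
  integral_eq_zero_of_hasDerivAt_of_integrable G.hasDerivAt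
    (SchwartzMap.derivCLM ℝ ℂ G).integrable G.integrable

lemma SchwartzMap.integrable_one_add_abs_mul (G : 𝓢(ℝ, ℂ)) :
    Integrable fun x => (1 + |x|) * ‖G x‖ := by
  simpa [add_mul] using! G.integrable.norm.add (by simpa using! G.integrable_pow_mul volume 1)

/-- Since `G'` has mean zero, the value of `φ` at `x` may be subtracted in the derivative of a
convolution. -/
lemma SchwartzMap.integral_derivCLM_mul_sub (G : 𝓢(ℝ, ℂ)) {D N : ℝ} (hD : 0 ≤ D)
    (hN : 1 ≤ N) {φ : ℝ → ℂ} (hφ : Measurable φ)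
    (hint : Integrable fun x => jap x ^ (-D) * ‖φ x‖) (x : ℝ) :
    ∫ y, SchwartzMap.derivCLM ℝ ℂ G (N * (x - y)) * (φ y - φ x) =
      ∫ y, SchwartzMap.derivCLM ℝ ℂ G (N * (x - y)) * φ y := by
  set G' := SchwartzMap.derivCLM ℝ ℂ G with hG'
  have hN0 : N ≠ 0 := by linarith
  have hG'int : Integrable fun y => G' (N * (x - y)) :=
    (G'.integrable.comp_mul_left' hN0).comp_sub_left x
  have hzero : ∫ y, G' (N * (x - y)) = 0 := by
    rw [integral_sub_left_eq_self (fun y => G' (N * y)) volume x,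
      Measure.integral_comp_mul_left (fun y => G' y) N, hG', G.integral_derivCLM, smul_zero]
  simp only [mul_sub (G' _)]
  rw [integral_sub (SchwartzMap.integrable_comp_mul hD hN hφ hint x) (hG'int.mul_const _),
    integral_mul_const, hzero, zero_mul, sub_zero]

lemma PLE_eq_integral {ρ : ℝ → ℝ} {G : 𝓢(ℝ, ℂ)} {N : ℝ}
    (hG : ∀ y, invFourier (rhoLE ρ N) y = N * G (N * y)) (φ : ℝ → ℂ) (x : ℝ) :
    PLE ρ N φ x = N * ∫ y, G (N * (x - y)) * φ y := by
  rw [PLE, ← integral_sub_left_eq_self _ volume x, ← integral_const_mul]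
  simp [hG, mul_assoc]

lemma norm_le_of_holderNormE {α : ℝ} {I : Set ℝ} {φ : ℝ → ℂ}
    (hfin : holderNormE α I φ ≠ ⊤) {x : ℝ} (hx : x ∈ I) :
    ‖φ x‖ ≤ (holderNormE α I φ).toReal := by
  have h1 : (‖φ x‖₊ : ℝ≥0∞) ≤ supNormE I φ := le_iSup₂ (f := fun x _ => (‖φ x‖₊ : ℝ≥0∞)) x hx
  have h2 : supNormE I φ ≤ holderNormE α I φ := by
    unfold holderNormE
    split_ifs
    · exact le_rfl
    · exact le_self_add
  simpa using ENNReal.toReal_mono hfin (h1.trans h2)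

/-- A function of finite Hölder norm satisfies the Hölder estimate at all scales. -/
lemma norm_sub_le_of_holderNormE {α : ℝ} (hα0 : 0 ≤ α) {I : Set ℝ} {φ : ℝ → ℂ}
    (hfin : holderNormE α I φ ≠ ⊤) {x y : ℝ} (hx : x ∈ I) (hy : y ∈ I) :
    ‖φ y - φ x‖ ≤ 2 * (holderNormE α I φ).toReal * |x - y| ^ α := by
  have hH := ENNReal.toReal_nonneg (a := holderNormE α I φ)
  have hsum : ‖φ y - φ x‖ ≤ 2 * (holderNormE α I φ).toReal := by
    linarith [norm_sub_le (φ y) (φ x), norm_le_of_holderNormE hfin hx,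
      norm_le_of_holderNormE hfin hy]
  rcases eq_or_ne α 0 with rfl | hα
  · simpa using hsum
  rcases eq_or_ne x y with rfl | hxy
  · simp [Real.zero_rpow hα]
  have hpos : 0 < |x - y| := abs_pos.2 (sub_ne_zero.2 hxy)
  rcases le_total |x - y| 1 with hle | hge
  · have h1 : ENNReal.ofReal (‖φ x - φ y‖ / |x - y| ^ α) ≤ holderSemiE α I φ :=
      le_iSup₂_of_le x hx <| le_iSup₂_of_le y hy <| le_iSup₂_of_le hxy hle le_rfl
    have h2 : holderSemiE α I φ ≤ holderNormE α I φ := by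
      rw [holderNormE, if_neg hα]
      exact le_add_self
    have h3 := (ENNReal.ofReal_le_iff_le_toReal hfin).1 (h1.trans h2)
    rw [div_le_iff₀ (by positivity), norm_sub_rev] at h3
    have : 0 ≤ (holderNormE α I φ).toReal * |x - y| ^ α := by positivity
    linarith
  · exact hsum.trans (le_mul_of_one_le_right (by positivity) (Real.one_le_rpow hge hα0))

/-- Away from `[-2R, 2R]`, the rescaled kernel is controlled by the weight. -/
lemma kernel_le_weight {D R N C x y g : ℝ} (hD : 0 ≤ D) (hR : 1 ≤ R) (hN : 1 ≤ N)
    (hg0 : 0 ≤ g) (hg : (1 + |N * (x - y)|) ^ (2 + D + D) * g ≤ C) (hx : |x| ≤ R)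
    (hy : 2 * R ≤ |y|) :
    N ^ 2 * g ≤ 2 ^ D * C * ((R * N) ^ (-D) * jap y ^ (-D)) := by
  have hz : |y| ≤ |x| + |x - y| := by simpa using abs_sub x (x - y)
  have hNz : |N * (x - y)| = N * |x - y| := by rw [abs_mul, abs_of_pos (by linarith)]
  set t := 1 + |N * (x - y)|
  have hz0 := abs_nonneg (x - y)
  have ht0 : 0 < t := by positivity
  have hNt : N ≤ t := by nlinarith
  have hRNt : R * N ≤ t := by nlinarith
  have hjt : jap y ≤ 2 * t := by nlinarith [jap_le_one_add_abs y]
  have hj : 0 < jap y := one_pos.trans_le (one_le_jap y)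
  have hRN : 0 < R * N := by positivity
  rw [Real.rpow_neg hj.le, Real.rpow_neg hRN.le, ← mul_inv, ← div_eq_mul_inv,
    le_div_iff₀ (by positivity)]
  calc N ^ 2 * g * ((R * N) ^ D * jap y ^ D)
      ≤ t ^ 2 * g * (t ^ D * (2 * t) ^ D) := by gcongr
    _ = 2 ^ D * (t ^ (2 + D + D) * g) := by
      rw [Real.mul_rpow (by positivity) ht0.le, Real.rpow_add ht0, Real.rpow_add ht0]
      norm_cast
      ring
    _ ≤ 2 ^ D * C := by gcongr

lemma rpow_sub_one_mul_sq_mul_le {α N z : ℝ} (hα0 : 0 ≤ α) (hα1 : α ≤ 1) (hN : 0 < N) :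
    N ^ (α - 1) * N ^ 2 * |z| ^ α ≤ N * (1 + |N * z|) := by
  have h : N ^ (α - 1) * N ^ 2 * |z| ^ α = N * |N * z| ^ α := by
    rw [abs_mul, abs_of_pos hN, Real.mul_rpow hN.le (abs_nonneg z), Real.rpow_sub_one hN.ne']
    field_simp
  rw [h]
  gcongr
  calc |N * z| ^ α ≤ (1 + |N * z|) ^ α := by gcongr; linarith
    _ ≤ (1 + |N * z|) ^ (1 : ℝ) :=
      Real.rpow_le_rpow_of_exponent_le (by linarith [abs_nonneg (N * z)]) hα1
    _ = 1 + |N * z| := Real.rpow_one _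

/-- Pointwise bound for the integrand of `N^{α-1} ∂ₓ P_{≤N} φ (x)`: a Hölder part near the
diagonal, and a weighted part away from `[-2R, 2R]`. -/
lemma rpow_mul_kernel_mul_norm_sub_le {α D R N C : ℝ} (hα0 : 0 ≤ α) (hα1 : α < 1) (hD : 0 ≤ D)
    (hR : 1 ≤ R) (hN : 1 ≤ N) {φ : ℝ → ℂ}
    (hfin : holderNormE α (Icc (-(2 * R)) (2 * R)) φ ≠ ⊤) {x y g : ℝ} (hx : x ∈ Icc (-R) R)
    (hg0 : 0 ≤ g) (hg : (1 + |N * (x - y)|) ^ (2 + D + D) * g ≤ C) :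
    N ^ (α - 1) * N ^ 2 * g * ‖φ y - φ x‖ ≤
      2 * (holderNormE α (Icc (-(2 * R)) (2 * R)) φ).toReal *
          (N * ((1 + |N * (x - y)|) * g)) +
        2 ^ D * C * (R * N) ^ (-D) * (jap y ^ (-D) * ‖φ y‖) := by
  set H := (holderNormE α (Icc (-(2 * R)) (2 * R)) φ).toReal
  have hH0 : 0 ≤ H := ENNReal.toReal_nonneg
  have hN0 : 0 < N := by linarith
  have hC : 0 ≤ C := le_trans (by positivity) hg
  have hj : 0 < jap y := one_pos.trans_le (one_le_jap y)
  have hx2 : x ∈ Icc (-(2 * R)) (2 * R) := ⟨by linarith [hx.1], by linarith [hx.2]⟩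
  have hlocal : N ^ (α - 1) * N ^ 2 * g * (2 * H * |x - y| ^ α) ≤
      2 * H * (N * ((1 + |N * (x - y)|) * g)) := by
    calc N ^ (α - 1) * N ^ 2 * g * (2 * H * |x - y| ^ α)
        = 2 * H * (N ^ (α - 1) * N ^ 2 * |x - y| ^ α * g) := by ring
      _ ≤ 2 * H * (N * (1 + |N * (x - y)|) * g) := by
        gcongr 2 * H * (?_ * g)
        exact rpow_sub_one_mul_sq_mul_le hα0 hα1.le hN0
      _ = _ := by ring
  by_cases hy : y ∈ Icc (-(2 * R)) (2 * R)
  · have hφ := norm_sub_le_of_holderNormE hα0 hfin hx2 hy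
    have hfar : 0 ≤ 2 ^ D * C * (R * N) ^ (-D) * (jap y ^ (-D) * ‖φ y‖) := by positivity
    calc N ^ (α - 1) * N ^ 2 * g * ‖φ y - φ x‖
        ≤ N ^ (α - 1) * N ^ 2 * g * (2 * H * |x - y| ^ α) := by gcongr
      _ ≤ _ := by linarith
  · have hxR : |x| ≤ R := abs_le.2 hx
    have hyR : 2 * R ≤ |y| := by
      by_contra! h
      exact hy (abs_le.1 h.le)
    have hz : |y| ≤ |x| + |x - y| := by simpa using abs_sub x (x - y)
    have hφx : ‖φ x‖ ≤ 2 * H * |x - y| ^ α := by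
      have h1 := norm_le_of_holderNormE hfin hx2
      have h2 : 1 ≤ |x - y| ^ α := Real.one_le_rpow (by linarith) hα0
      nlinarith
    have hk := kernel_le_weight hD hR hN hg0 hg hxR hyR
    have hN1 : N ^ (α - 1) ≤ 1 := Real.rpow_le_one_of_one_le_of_nonpos hN (by linarith)
    have hφy : N ^ (α - 1) * N ^ 2 * g * ‖φ y‖ ≤
        2 ^ D * C * (R * N) ^ (-D) * (jap y ^ (-D) * ‖φ y‖) := by
      calc N ^ (α - 1) * N ^ 2 * g * ‖φ y‖ = N ^ (α - 1) * (N ^ 2 * g) * ‖φ y‖ := by ring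
        _ ≤ 1 * (2 ^ D * C * ((R * N) ^ (-D) * jap y ^ (-D))) * ‖φ y‖ := by gcongr
        _ = _ := by ring
    calc N ^ (α - 1) * N ^ 2 * g * ‖φ y - φ x‖
        ≤ N ^ (α - 1) * N ^ 2 * g * (‖φ y‖ + 2 * H * |x - y| ^ α) := by
          gcongr
          exact (norm_sub_le _ _).trans (by gcongr)
      _ ≤ _ := by rw [mul_add]; linarith

/-- The derivative bound at a point, for a convolution kernel with Schwartz profile `G`. -/
lemma rpow_mul_norm_deriv_PLE_le {ρ : ℝ → ℝ} {G : 𝓢(ℝ, ℂ)} {α D R N C : ℝ} (hα0 : 0 ≤ α)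
    (hα1 : α < 1) (hD : 0 ≤ D) (hR : 1 ≤ R) (hN : 1 ≤ N)
    (hG : ∀ y, invFourier (rhoLE ρ N) y = N * G (N * y))
    (hC : ∀ z, (1 + |z|) ^ (2 + D + D) * ‖SchwartzMap.derivCLM ℝ ℂ G z‖ ≤ C) {φ : ℝ → ℂ}
    (hφ : Measurable φ) (hint : Integrable fun x => jap x ^ (-D) * ‖φ x‖)
    (hfin : holderNormE α (Icc (-(2 * R)) (2 * R)) φ ≠ ⊤) {x : ℝ} (hx : x ∈ Icc (-R) R) :
    N ^ (α - 1) * ‖deriv (PLE ρ N φ) x‖ ≤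
      2 * (holderNormE α (Icc (-(2 * R)) (2 * R)) φ).toReal *
          (∫ z, (1 + |z|) * ‖SchwartzMap.derivCLM ℝ ℂ G z‖) +
        2 ^ D * C * (R * N) ^ (-D) * wL1 D φ := by
  have hN0 : 0 < N := by linarith
  set G' := SchwartzMap.derivCLM ℝ ℂ G
  have hderiv : deriv (PLE ρ N φ) x = (N : ℂ) ^ 2 * ∫ y, G' (N * (x - y)) * (φ y - φ x) := by
    rw [funext (PLE_eq_integral hG φ), G.integral_derivCLM_mul_sub hD hN hφ hint,
      ((G.hasDerivAt_integral_comp_mul hD hN hφ hint x).const_mul (N : ℂ)).deriv]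
    simp only [mul_assoc, integral_const_mul]
    ring
  have hΦ : Integrable fun y => N * ((1 + |N * (x - y)|) * ‖G' (N * (x - y))‖) :=
    ((G'.integrable_one_add_abs_mul.comp_mul_left' hN0.ne').comp_sub_left x).const_mul N
  have hΦint : ∫ y, N * ((1 + |N * (x - y)|) * ‖G' (N * (x - y))‖) =
      ∫ z, (1 + |z|) * ‖G' z‖ := by
    rw [integral_const_mul, integral_sub_left_eq_self
      (fun y => (1 + |N * y|) * ‖G' (N * y)‖) volume x,
      Measure.integral_comp_mul_left (fun z => (1 + |z|) * ‖G' z‖) N, abs_of_pos (by positivity),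
      smul_eq_mul, mul_inv_cancel_left₀ hN0.ne']
  calc N ^ (α - 1) * ‖deriv (PLE ρ N φ) x‖
      = N ^ (α - 1) * N ^ 2 * ‖∫ y, G' (N * (x - y)) * (φ y - φ x)‖ := by
        rw [hderiv, norm_mul, norm_pow, Complex.norm_real, Real.norm_of_nonneg hN0.le, mul_assoc]
    _ ≤ N ^ (α - 1) * N ^ 2 * ∫ y, ‖G' (N * (x - y)) * (φ y - φ x)‖ := by
        gcongr
        exact norm_integral_le_integral_norm _
    _ = ∫ y, N ^ (α - 1) * N ^ 2 * ‖G' (N * (x - y))‖ * ‖φ y - φ x‖ := by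
        rw [← integral_const_mul]
        simp only [norm_mul, mul_assoc]
    _ ≤ ∫ y, (2 * (holderNormE α (Icc (-(2 * R)) (2 * R)) φ).toReal *
          (N * ((1 + |N * (x - y)|) * ‖G' (N * (x - y))‖)) +
        2 ^ D * C * (R * N) ^ (-D) * (jap y ^ (-D) * ‖φ y‖)) := by
        refine integral_mono_of_nonneg (ae_of_all _ fun y => by positivity)
          ((hΦ.const_mul _).add (hint.const_mul _)) (ae_of_all _ fun y => ?_)
        exact rpow_mul_kernel_mul_norm_sub_le hα0 hα1 hD hR hN hfin hx (norm_nonneg _) (hC _)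
    _ = _ := by
        rw [integral_add (hΦ.const_mul _) (hint.const_mul _),
          integral_const_mul (2 * _) fun y => N * _,
          hΦint, integral_const_mul, wL1]

/-- **Derivative bound for low-frequency projections** (Lemma 2.2, estimate (2.6)). -/
theorem PLE_deriv_bound (ρ : ℝ → ℝ) (hρ : IsLPBump ρ) (α : ℝ) (hα0 : 0 ≤ α) (hα1 : α < 1)
    (D : ℝ) (hD : 1 ≤ D) :
    ∃ C : ℝ, 0 < C ∧
      ∀ R N : ℝ, 10 ≤ R → (∃ k : ℕ, N = 2 ^ k) →
        ∀ φ : ℝ → ℂ, Measurable φ → Integrable (fun x => jap x ^ (-D) * ‖φ x‖) →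
          ENNReal.ofReal (N ^ (α - 1)) * supNormE (Set.Icc (-R) R) (deriv (PLE ρ N φ)) ≤
            ENNReal.ofReal C *
              (holderNormE α (Set.Icc (-(2 * R)) (2 * R)) φ +
                ENNReal.ofReal ((R * N) ^ (-D)) * ENNReal.ofReal (wL1 D φ)) := by
  obtain ⟨G, hG⟩ := exists_schwartz_invFourier_rhoLE hρ
  obtain ⟨C, hC0, hC⟩ :=
    (SchwartzMap.derivCLM ℝ ℂ G).exists_one_add_abs_rpow_mul_norm_le (2 + D + D)
  set J := ∫ z, (1 + |z|) * ‖SchwartzMap.derivCLM ℝ ℂ G z‖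
  have hJ : 0 ≤ J := integral_nonneg fun z => by positivity
  have hA : 0 < 2 * J + 2 ^ D * C := by positivity
  refine ⟨2 * J + 2 ^ D * C, hA, ?_⟩
  rintro R N hR ⟨k, rfl⟩ φ hφ hint
  have hN : (1 : ℝ) ≤ 2 ^ k := one_le_pow₀ one_le_two
  generalize (2 : ℝ) ^ k = N at hN
  set E := holderNormE α (Set.Icc (-(2 * R)) (2 * R)) φ
  rcases eq_or_ne E ⊤ with htop | hfin
  · rw [htop, top_add, ENNReal.mul_top (by simpa using hA)]
    exact le_top
  have hN0 : 0 < N := by linarith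
  have hw : 0 ≤ wL1 D φ := integral_nonneg fun x =>
    mul_nonneg (Real.rpow_nonneg (Real.sqrt_nonneg _) _) (norm_nonneg _)
  have hRN : 0 ≤ (R * N) ^ (-D) := by positivity
  rw [supNormE, ENNReal.mul_iSup]
  refine iSup_le fun x => ?_
  rw [ENNReal.mul_iSup]
  refine iSup_le fun hx => ?_
  have hmain := rpow_mul_norm_deriv_PLE_le hα0 hα1 (by linarith) (by linarith) hN (hG N hN0) hC
    hφ hint hfin hx
  have hE0 : 0 ≤ E.toReal := ENNReal.toReal_nonneg
  rw [← ENNReal.ofReal_toReal hfin, ← ENNReal.ofReal_mul hRN, ← ENNReal.ofReal_add hE0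
    (by positivity), ← ENNReal.ofReal_mul hA.le, ← enorm_eq_nnnorm, ← ofReal_norm,
    ← ENNReal.ofReal_mul (by positivity)]
  refine ENNReal.ofReal_le_ofReal (hmain.trans ?_)
  have h1 : 0 ≤ 2 ^ D * C * E.toReal := by positivity
  have h2 : 0 ≤ J * ((R * N) ^ (-D) * wL1 D φ) := by positivity
  linear_combination h1 + 2 * h2
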